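/- Let φ = (φ₁, φ₂) and χ = (χ₁, χ₂) both solve -y'' + q·y = λ·y on [-π, 0] and on [0, π] respectively, and suppose both φ and χ satisfy the transmission conditions Γ₁ = Γ₂ = 0. Then the Wronskians w₁(x) := φ₁(x)χ₁'(x) - φ₁'(x)χ₁(x) and w₂(x) := φ₂(x)χ₂'(x) - φ₂'(x)χ₂(x) are constant on their respective intervals, and ρ₁₂·w₁ = ρ₃₄·w₂. -/

import Mathlib

open Real

/-!
By Lagrange's identity the Wronskian of two solutions of `-y'' + q y = lam y` has derivative zero.
The transmission conditions for `φ` and `χ` together form a `2 × 2` matrix equation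
`M Y₁ + N Y₂ = 0`, where `Yᵢ` has the one-sided Cauchy data of `χ` and `φ` as columns. Since
`det (-N) = det N` in even dimension, taking determinants gives `ρ₁₂ w₁ = ρ₃₄ w₂`.
-/

section Determinant

variable {R : Type*} [CommRing R]

theorem det_mul_det_eq_of_mul_add_mul_eq_zero {n : Type*} [Fintype n] [DecidableEq n]
    (hn : Even (Fintype.card n)) {M N Y Z : Matrix n n R} (h : M * Y + N * Z = 0) :
    M.det * Y.det = N.det * Z.det :=
  calc
    M.det * Y.det = (M * Y).det := (Matrix.det_mul M Y).symm
    _ = (-(N * Z)).det := by rw [eq_neg_of_add_eq_zero_left h]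
    _ = (N * Z).det := by rw [Matrix.det_neg, hn.neg_one_pow, one_mul]
    _ = N.det * Z.det := Matrix.det_mul N Z

theorem weighted_wronskian_eq_of_transmission
    {a₁ a₂ a₃ a₄ b₁ b₂ b₃ b₄ y₁ y₁' y₂ y₂' z₁ z₁' z₂ z₂' : R}
    (hay : a₁ * y₁' + a₂ * y₁ + a₃ * y₂' + a₄ * y₂ = 0)
    (hby : b₁ * y₁' + b₂ * y₁ + b₃ * y₂' + b₄ * y₂ = 0)
    (haz : a₁ * z₁' + a₂ * z₁ + a₃ * z₂' + a₄ * z₂ = 0)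
    (hbz : b₁ * z₁' + b₂ * z₁ + b₃ * z₂' + b₄ * z₂ = 0) :
    (a₁ * b₂ - a₂ * b₁) * (y₁ * z₁' - y₁' * z₁) =
      (a₃ * b₄ - a₄ * b₃) * (y₂ * z₂' - y₂' * z₂) := by
  have transmission :
      !![a₁, a₂; b₁, b₂] * !![z₁', y₁'; z₁, y₁] +
        !![a₃, a₄; b₃, b₄] * !![z₂', y₂'; z₂, y₂] = 0 := by
    ext i j
    fin_cases i <;> fin_cases j <;> simpa [← add_assoc]
  have det_eq := det_mul_det_eq_of_mul_add_mul_eq_zero (by simp) transmission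
  simp only [Matrix.det_fin_two_of] at det_eq
  linear_combination det_eq

end Determinant

section Wronskian

variable {𝕜 A : Type*} [RCLike 𝕜] [NormedCommRing A] [NormedAlgebra 𝕜 A]

/-- The Wronskian of `f` and `g`. The derivatives `f'` and `g'` are passed explicitly, so that at
an endpoint of an interval they may be one-sided. -/
def wronskian (f f' g g' : 𝕜 → A) (x : 𝕜) : A :=
  f x * g' x - f' x * g x

/-- `y` solves the Sturm–Liouville equation `-y'' + q y = lam y` on `s`. The functions `y'` and
`y''` are the first two derivatives of `y` relative to `s`. -/
structure IsSturmLiouvilleSolutionOn (q : 𝕜 → A) (lam : A) (s : Set 𝕜) (y y' y'' : 𝕜 → A) :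
    Prop where
  hasDerivWithinAt : ∀ x ∈ s, HasDerivWithinAt y (y' x) s x
  hasDerivWithinAt_deriv : ∀ x ∈ s, HasDerivWithinAt y' (y'' x) s x
  equation : ∀ x ∈ s, -y'' x + q x * y x = lam * y x

theorem hasDerivWithinAt_wronskian {f f' g g' : 𝕜 → A} {f'' g'' : A} {s : Set 𝕜} {x : 𝕜}
    (hf : HasDerivWithinAt f (f' x) s x) (hf' : HasDerivWithinAt f' f'' s x)
    (hg : HasDerivWithinAt g (g' x) s x) (hg' : HasDerivWithinAt g' g'' s x) :
    HasDerivWithinAt (wronskian f f' g g') (f x * g'' - f'' * g x) s x :=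
  ((hf.mul hg').sub (hf'.mul hg)).congr_deriv (by ring)

theorem eq_of_hasDerivWithinAt_zero {E : Type*} [NormedAddCommGroup E] [NormedSpace 𝕜 E]
    {f : 𝕜 → E} {s : Set 𝕜} (hs : Convex ℝ s) (hf : ∀ x ∈ s, HasDerivWithinAt f 0 s x)
    {x y : 𝕜} (hx : x ∈ s) (hy : y ∈ s) : f x = f y := by
  have norm_image_sub_le : ‖f x - f y‖ ≤ 0 * ‖x - y‖ :=
    hs.norm_image_sub_le_of_norm_hasDerivWithin_le hf (fun _ _ => norm_zero.le) hy hx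
  rwa [zero_mul, norm_le_zero_iff, sub_eq_zero] at norm_image_sub_le

namespace IsSturmLiouvilleSolutionOn

variable {q : 𝕜 → A} {lam : A} {s : Set 𝕜} {f f' f'' g g' g'' : 𝕜 → A}

theorem of_hasDerivAt (hf : ∀ x ∈ s, HasDerivAt f (f' x) x)
    (hf' : ∀ x ∈ s, HasDerivAt f' (f'' x) x)
    (heq : ∀ x ∈ s, -f'' x + q x * f x = lam * f x) :
    IsSturmLiouvilleSolutionOn q lam s f f' f'' :=
  ⟨fun x hx => (hf x hx).hasDerivWithinAt, fun x hx => (hf' x hx).hasDerivWithinAt, heq⟩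

theorem hasDerivWithinAt_wronskian_zero (hf : IsSturmLiouvilleSolutionOn q lam s f f' f'')
    (hg : IsSturmLiouvilleSolutionOn q lam s g g' g'') {x : 𝕜} (hx : x ∈ s) :
    HasDerivWithinAt (wronskian f f' g g') 0 s x := by
  have lagrange : f x * g'' x - f'' x * g x = 0 := by
    linear_combination g x * hf.equation x hx - f x * hg.equation x hx
  exact lagrange ▸ hasDerivWithinAt_wronskian (hf.hasDerivWithinAt x hx)
    (hf.hasDerivWithinAt_deriv x hx) (hg.hasDerivWithinAt x hx) (hg.hasDerivWithinAt_deriv x hx)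

theorem wronskian_eq (hs : Convex ℝ s) (hf : IsSturmLiouvilleSolutionOn q lam s f f' f'')
    (hg : IsSturmLiouvilleSolutionOn q lam s g g' g'') :
    ∀ x ∈ s, ∀ x' ∈ s, wronskian f f' g g' x = wronskian f f' g g' x' :=
  fun _ hx _ hx' =>
    eq_of_hasDerivWithinAt_zero hs (fun _ => hf.hasDerivWithinAt_wronskian_zero hg) hx hx'

end IsSturmLiouvilleSolutionOn

theorem wronskians_constant_and_weighted_equal_general
    {q₁ q₂ : 𝕜 → A} {lam : A} {s₁ s₂ : Set 𝕜} (hs₁ : Convex ℝ s₁) (hs₂ : Convex ℝ s₂) {c : 𝕜}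
    {a₁ a₂ a₃ a₄ b₁ b₂ b₃ b₄ : A}
    {φ₁ φ₁' φ₁'' φ₂ φ₂' φ₂'' χ₁ χ₁' χ₁'' χ₂ χ₂' χ₂'' : 𝕜 → A}
    (hφ₁ : IsSturmLiouvilleSolutionOn q₁ lam s₁ φ₁ φ₁' φ₁'')
    (hφ₂ : IsSturmLiouvilleSolutionOn q₂ lam s₂ φ₂ φ₂' φ₂'')
    (hχ₁ : IsSturmLiouvilleSolutionOn q₁ lam s₁ χ₁ χ₁' χ₁'')
    (hχ₂ : IsSturmLiouvilleSolutionOn q₂ lam s₂ χ₂ χ₂' χ₂'')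
    (hΓ₁φ : a₁ * φ₁' c + a₂ * φ₁ c + a₃ * φ₂' c + a₄ * φ₂ c = 0)
    (hΓ₂φ : b₁ * φ₁' c + b₂ * φ₁ c + b₃ * φ₂' c + b₄ * φ₂ c = 0)
    (hΓ₁χ : a₁ * χ₁' c + a₂ * χ₁ c + a₃ * χ₂' c + a₄ * χ₂ c = 0)
    (hΓ₂χ : b₁ * χ₁' c + b₂ * χ₁ c + b₃ * χ₂' c + b₄ * χ₂ c = 0) :
    (∀ x ∈ s₁, ∀ x' ∈ s₁, wronskian φ₁ φ₁' χ₁ χ₁' x = wronskian φ₁ φ₁' χ₁ χ₁' x') ∧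
    (∀ x ∈ s₂, ∀ x' ∈ s₂, wronskian φ₂ φ₂' χ₂ χ₂' x = wronskian φ₂ φ₂' χ₂ χ₂' x') ∧
    (a₁ * b₂ - a₂ * b₁) * wronskian φ₁ φ₁' χ₁ χ₁' c =
      (a₃ * b₄ - a₄ * b₃) * wronskian φ₂ φ₂' χ₂ χ₂' c :=
  ⟨hφ₁.wronskian_eq hs₁ hχ₁, hφ₂.wronskian_eq hs₂ hχ₂,
    weighted_wronskian_eq_of_transmission hΓ₁φ hΓ₂φ hΓ₁χ hΓ₂χ⟩

end Wronskian

/-- If `φ = (φ₁, φ₂)` and `χ = (χ₁, χ₂)` both solve `-y'' + q y = λ y` on `[-π,0]`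
and `[0,π]` respectively, and both satisfy the transmission conditions
`Γ₁ = Γ₂ = 0`, then the Wronskians `w₁ = φ₁χ₁' - φ₁'χ₁` and `w₂ = φ₂χ₂' - φ₂'χ₂`
are constant on their intervals and `ρ₁₂ · w₁ = ρ₃₄ · w₂`. -/
theorem wronskians_constant_and_weighted_equal
    (q : ℝ → ℝ) (hq : ContinuousOn q (Set.Icc (-π) π)) (lam : ℂ)
    (a₁ a₂ a₃ a₄ b₁ b₂ b₃ b₄ : ℝ)
    (hρ₁₂ : 0 < a₁ * b₂ - a₂ * b₁) (hρ₃₄ : 0 < a₃ * b₄ - a₄ * b₃)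
    (φ₁ φ₁' φ₁'' φ₂ φ₂' φ₂'' χ₁ χ₁' χ₁'' χ₂ χ₂' χ₂'' : ℝ → ℂ)
    (hφ₁d : ∀ x ∈ Set.Icc (-π) 0, HasDerivAt φ₁ (φ₁' x) x)
    (hφ₁d2 : ∀ x ∈ Set.Icc (-π) 0, HasDerivAt φ₁' (φ₁'' x) x)
    (hφ₁c : ContinuousOn φ₁'' (Set.Icc (-π) 0))
    (hφ₂d : ∀ x ∈ Set.Icc 0 π, HasDerivAt φ₂ (φ₂' x) x)
    (hφ₂d2 : ∀ x ∈ Set.Icc 0 π, HasDerivAt φ₂' (φ₂'' x) x)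
    (hφ₂c : ContinuousOn φ₂'' (Set.Icc 0 π))
    (hχ₁d : ∀ x ∈ Set.Icc (-π) 0, HasDerivAt χ₁ (χ₁' x) x)
    (hχ₁d2 : ∀ x ∈ Set.Icc (-π) 0, HasDerivAt χ₁' (χ₁'' x) x)
    (hχ₁c : ContinuousOn χ₁'' (Set.Icc (-π) 0))
    (hχ₂d : ∀ x ∈ Set.Icc 0 π, HasDerivAt χ₂ (χ₂' x) x)
    (hχ₂d2 : ∀ x ∈ Set.Icc 0 π, HasDerivAt χ₂' (χ₂'' x) x)
    (hχ₂c : ContinuousOn χ₂'' (Set.Icc 0 π))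
    (heqφ₁ : ∀ x ∈ Set.Icc (-π) 0, -φ₁'' x + (q x : ℂ) * φ₁ x = lam * φ₁ x)
    (heqφ₂ : ∀ x ∈ Set.Icc 0 π, -φ₂'' x + (q x : ℂ) * φ₂ x = lam * φ₂ x)
    (heqχ₁ : ∀ x ∈ Set.Icc (-π) 0, -χ₁'' x + (q x : ℂ) * χ₁ x = lam * χ₁ x)
    (heqχ₂ : ∀ x ∈ Set.Icc 0 π, -χ₂'' x + (q x : ℂ) * χ₂ x = lam * χ₂ x)
    (hΓ₁φ : (a₁ : ℂ) * φ₁' 0 + (a₂ : ℂ) * φ₁ 0 + (a₃ : ℂ) * φ₂' 0 + (a₄ : ℂ) * φ₂ 0 = 0)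
    (hΓ₂φ : (b₁ : ℂ) * φ₁' 0 + (b₂ : ℂ) * φ₁ 0 + (b₃ : ℂ) * φ₂' 0 + (b₄ : ℂ) * φ₂ 0 = 0)
    (hΓ₁χ : (a₁ : ℂ) * χ₁' 0 + (a₂ : ℂ) * χ₁ 0 + (a₃ : ℂ) * χ₂' 0 + (a₄ : ℂ) * χ₂ 0 = 0)
    (hΓ₂χ : (b₁ : ℂ) * χ₁' 0 + (b₂ : ℂ) * χ₁ 0 + (b₃ : ℂ) * χ₂' 0 + (b₄ : ℂ) * χ₂ 0 = 0) :
    (∀ x ∈ Set.Icc (-π) 0, ∀ x' ∈ Set.Icc (-π) 0,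
        φ₁ x * χ₁' x - φ₁' x * χ₁ x = φ₁ x' * χ₁' x' - φ₁' x' * χ₁ x') ∧
    (∀ x ∈ Set.Icc 0 π, ∀ x' ∈ Set.Icc 0 π,
        φ₂ x * χ₂' x - φ₂' x * χ₂ x = φ₂ x' * χ₂' x' - φ₂' x' * χ₂ x') ∧
    ((a₁ * b₂ - a₂ * b₁ : ℝ) : ℂ) * (φ₁ 0 * χ₁' 0 - φ₁' 0 * χ₁ 0) =
      ((a₃ * b₄ - a₄ * b₃ : ℝ) : ℂ) * (φ₂ 0 * χ₂' 0 - φ₂' 0 * χ₂ 0) := by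
  push_cast
  exact wronskians_constant_and_weighted_equal_general (convex_Icc _ _) (convex_Icc _ _)
    (.of_hasDerivAt hφ₁d hφ₁d2 heqφ₁) (.of_hasDerivAt hφ₂d hφ₂d2 heqφ₂)
    (.of_hasDerivAt hχ₁d hχ₁d2 heqχ₁) (.of_hasDerivAt hχ₂d hχ₂d2 heqχ₂) hΓ₁φ hΓ₂φ hΓ₁χ hΓ₂χ
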